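/- Let (X, f_{1,∞}) be a k-periodic NDS (i.e., f_{n+k} = f_n for every n ∈ ℕ) and let g = f_k ∘ f_{k-1} ∘ ⋯ ∘ f_1. Then the NDS (X, f_{1,∞}) is strongly multi-transitive if and only if the autonomous system (X, g) is strongly multi-transitive (i.e., for every m ∈ ℕ, every a = (a_1,…,a_m) ∈ ℕ^m and all nonempty open U_1,…,U_m, V_1,…,V_m ⊆ X there exists l ∈ ℕ with g^{a_j l}(U_j) ∩ V_j ≠ ∅ for every j). -/

import Mathlib

open Set Filter

section NDSDefs

variable {X : Type*}

/-- `nComp f i n` is the composition `f (i+n-1) ∘ ⋯ ∘ f (i+1) ∘ f i`.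
Here `f` is the 0-indexed sequence of maps of the NDS (so `f 0` is the paper's `f₁`),
and `nComp f 0 n` is the paper's `f₁ⁿ`. -/
def nComp (f : ℕ → X → X) (i : ℕ) : ℕ → X → X
  | 0 => id
  | n + 1 => f (i + n) ∘ nComp f i n

/-- The `k`-th iterate NDS `f^{[k]}`: its `n`-th map (0-indexed) is `f_{kn+1}^{k}`
in the paper's notation, i.e. the composition of `k` maps of `f` starting at index `k*n`. -/
def iterNDS (f : ℕ → X → X) (k : ℕ) : ℕ → X → X :=
  fun n => nComp f (k * n) k

/-- The product NDS `f^{[a]} = f^{[a 0]} × ⋯ × f^{[a (r-1)]}` on `Fin r → X`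
for a vector `a : Fin r → ℕ`. -/
def vecIter (f : ℕ → X → X) {r : ℕ} (a : Fin r → ℕ) : ℕ → (Fin r → X) → Fin r → X :=
  fun n x i => iterNDS f (a i) n (x i)

section Topo

variable [TopologicalSpace X]

/-- Topological transitivity of an NDS. -/
def NDSTransitive (f : ℕ → X → X) : Prop :=
  ∀ U V : Set X, IsOpen U → U.Nonempty → IsOpen V → V.Nonempty →
    ∃ n : ℕ, 1 ≤ n ∧ (nComp f 0 n '' U ∩ V).Nonempty

/-- Multi-transitivity of an NDS. -/
def MultiTransitive (f : ℕ → X → X) : Prop :=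
  ∀ m : ℕ, 1 ≤ m → ∀ U V : Fin m → Set X,
    (∀ i, IsOpen (U i)) → (∀ i, (U i).Nonempty) →
    (∀ i, IsOpen (V i)) → (∀ i, (V i).Nonempty) →
    ∃ l : ℕ, 1 ≤ l ∧ ∀ i : Fin m, (nComp f 0 ((i.1 + 1) * l) '' U i ∩ V i).Nonempty

/-- Multi-transitivity of an NDS with respect to a vector `a`. -/
def MultiTransWrt (f : ℕ → X → X) {p : ℕ} (a : Fin p → ℕ) : Prop :=
  ∀ U V : Fin p → Set X,
    (∀ i, IsOpen (U i)) → (∀ i, (U i).Nonempty) →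
    (∀ i, IsOpen (V i)) → (∀ i, (V i).Nonempty) →
    ∃ l : ℕ, 1 ≤ l ∧ ∀ i : Fin p, (nComp f 0 (a i * l) '' U i ∩ V i).Nonempty

/-- Strong multi-transitivity of an NDS: multi-transitivity with respect to every
vector of positive integers. -/
def StronglyMultiTransitive (f : ℕ → X → X) : Prop :=
  ∀ p : ℕ, 1 ≤ p → ∀ a : Fin p → ℕ, (∀ i, 1 ≤ a i) → MultiTransWrt f a

/-- Weak mixing of order `n` of an NDS. -/
def WeaklyMixingOfOrder (f : ℕ → X → X) (n : ℕ) : Prop :=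
  ∀ U V : Fin n → Set X,
    (∀ i, IsOpen (U i)) → (∀ i, (U i).Nonempty) →
    (∀ i, IsOpen (V i)) → (∀ i, (V i).Nonempty) →
    ∃ m : ℕ, 1 ≤ m ∧ ∀ i : Fin n, (nComp f 0 m '' U i ∩ V i).Nonempty

/-- Weak mixing of all orders of an NDS. -/
def WeaklyMixingAllOrders (f : ℕ → X → X) : Prop :=
  ∀ n : ℕ, 2 ≤ n → WeaklyMixingOfOrder f n

/-- Mild mixing of an NDS: the product with any transitive NDS (on a compact
metric space, with continuous maps) is transitive. -/
def MildlyMixing (f : ℕ → X → X) : Prop :=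
  ∀ (Y : Type) [MetricSpace Y] [CompactSpace Y] (g : ℕ → Y → Y),
    (∀ n, Continuous (g n)) → NDSTransitive g →
      NDSTransitive (fun n (p : X × Y) => (f n p.1, g n p.2))

/-- Δ-transitivity of an NDS. -/
def DeltaTransitive (f : ℕ → X → X) : Prop :=
  ∀ m : ℕ, 1 ≤ m → ∃ Y : Set X, Dense Y ∧ IsGδ Y ∧
    ∀ x ∈ Y, Dense {y : Fin m → X | ∃ n : ℕ, 1 ≤ n ∧ y = fun i => nComp f 0 ((i.1 + 1) * n) x}

/-- Δ-mixing of an NDS. -/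
def DeltaMixing (f : ℕ → X → X) : Prop :=
  ∀ m : ℕ, 1 ≤ m → ∀ A : Set ℕ, A.Infinite → 0 ∉ A →
    ∃ Y : Set X, Dense Y ∧ IsGδ Y ∧
      ∀ x ∈ Y, Dense {y : Fin m → X | ∃ n ∈ A, y = fun i => nComp f 0 ((i.1 + 1) * n) x}

/-- The set `N_{f_{1,∞}}(U,V)` of (positive) hitting times. -/
def hitTimes (f : ℕ → X → X) (U V : Set X) : Set ℕ :=
  {n : ℕ | 1 ≤ n ∧ (nComp f 0 n '' U ∩ V).Nonempty}

/-- A set of positive integers is syndetic if it has bounded gaps. -/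
def Syndetic (A : Set ℕ) : Prop :=
  ∃ M : ℕ, ∀ i : ℕ, 1 ≤ i → ∃ j ∈ A, i ≤ j ∧ j ≤ i + M

/-- A set of positive integers is thick if it contains arbitrarily long runs. -/
def ThickSet (A : Set ℕ) : Prop :=
  ∀ p : ℕ, ∃ n : ℕ, 1 ≤ n ∧ ∀ j ≤ p, n + j ∈ A

/-- A set of positive integers is thickly syndetic. -/
def ThicklySyndetic (A : Set ℕ) : Prop :=
  ∀ l : ℕ, Syndetic {m : ℕ | ∀ j ≤ l, m + j ∈ A}

/-- Thick transitivity of an NDS. -/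
def ThicklyTransitive (f : ℕ → X → X) : Prop :=
  ∀ U V : Set X, IsOpen U → U.Nonempty → IsOpen V → V.Nonempty →
    ThickSet (hitTimes f U V)

/-- Thickly syndetic transitivity of an NDS. -/
def ThicklySyndeticallyTransitive (f : ℕ → X → X) : Prop :=
  ∀ U V : Set X, IsOpen U → U.Nonempty → IsOpen V → V.Nonempty →
    ThicklySyndetic (hitTimes f U V)

/-- Total transitivity of an NDS: every iterate `f^{[n]}` is transitive. -/
def TotallyTransitive (f : ℕ → X → X) : Prop :=
  ∀ n : ℕ, 1 ≤ n → NDSTransitive (iterNDS f n)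

/-- An NDS is feeble open if each map sends nonempty open sets to sets with
nonempty interior. -/
def FeebleOpen (f : ℕ → X → X) : Prop :=
  ∀ i : ℕ, ∀ U : Set X, IsOpen U → U.Nonempty → (interior (f i '' U)).Nonempty

/-- Strong multi-transitivity of an autonomous system `(X, g)`. -/
def ADSStronglyMultiTransitive (g : X → X) : Prop :=
  ∀ m : ℕ, 1 ≤ m → ∀ a : Fin m → ℕ, (∀ j, 1 ≤ a j) →
    ∀ U V : Fin m → Set X,
      (∀ j, IsOpen (U j)) → (∀ j, (U j).Nonempty) →
      (∀ j, IsOpen (V j)) → (∀ j, (V j).Nonempty) →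
      ∃ l : ℕ, 1 ≤ l ∧ ∀ j : Fin m, (g^[a j * l] '' U j ∩ V j).Nonempty

/-- Δ-transitivity of an autonomous system `(X, g)`. -/
def ADSDeltaTransitive (g : X → X) : Prop :=
  ∀ m : ℕ, 1 ≤ m → ∃ Y : Set X, Dense Y ∧ IsGδ Y ∧
    ∀ x ∈ Y, Dense {y : Fin m → X | ∃ n : ℕ, 1 ≤ n ∧ y = fun i => g^[(i.1 + 1) * n] x}

/-- Thickly syndetic transitivity of an autonomous system `(X, g)`. -/
def ADSThicklySyndeticallyTransitive (g : X → X) : Prop :=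
  ∀ U V : Set X, IsOpen U → U.Nonempty → IsOpen V → V.Nonempty →
    ThicklySyndetic {n : ℕ | 1 ≤ n ∧ (g^[n] '' U ∩ V).Nonempty}

end Topo

section MetricDefs

variable [MetricSpace X]

/-- The compositions `f_r^k` converge collectively to the iterates `g^k`. -/
def CollectiveConvergence (f : ℕ → X → X) (g : X → X) : Prop :=
  ∀ ε : ℝ, 0 < ε → ∃ r₀ : ℕ, ∀ r ≥ r₀, ∀ k : ℕ, 1 ≤ k → ∀ x : X,
    dist (nComp f r k x) (g^[k] x) < ε

/-- Chain mixing of an NDS. -/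
def NDSChainMixing (f : ℕ → X → X) : Prop :=
  ∀ x y : X, ∀ δ : ℝ, 0 < δ → ∃ N : ℕ, 1 ≤ N ∧ ∀ n ≥ N,
    ∃ c : ℕ → X, c 0 = x ∧ c n = y ∧ ∀ i < n, dist (f i (c i)) (c (i + 1)) < δ

/-- Chain transitivity of an NDS. -/
def NDSChainTransitive (f : ℕ → X → X) : Prop :=
  ∀ x y : X, ∀ δ : ℝ, 0 < δ → ∃ n : ℕ, 1 ≤ n ∧
    ∃ c : ℕ → X, c 0 = x ∧ c n = y ∧ ∀ i < n, dist (f i (c i)) (c (i + 1)) < δ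

/-- The shadowing property of an NDS. -/
def NDSShadowing (f : ℕ → X → X) : Prop :=
  ∀ ε : ℝ, 0 < ε → ∃ δ : ℝ, 0 < δ ∧ ∀ n : ℕ, ∀ c : ℕ → X,
    (∀ i < n, dist (f i (c i)) (c (i + 1)) < δ) →
      ∃ z : X, ∀ i ≤ n, dist (nComp f 0 i z) (c i) < ε

end MetricDefs

end NDSDefs

/-!
The maps of `f^{[k]}` are consecutive blocks of `k` maps of `f`, so following `f^{[k]}` along the
times `a_i l` is following `f` along the times `(k a_i) l = a_i (k l)`. Read the first way this is
an instance of strong multi-transitivity of `f` for the vector `k a`; read the second way it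
supplies the time `k l` for the vector `a`. Hence any NDS is strongly multi-transitive exactly when
`f^{[k]}` is, and if `f` is `k`-periodic then `f^{[k]}` is the constant sequence `g, g, …`.
-/

section Composition

variable {X : Type*}

theorem nComp_add (f : ℕ → X → X) (i m n : ℕ) :
    nComp f i (m + n) = nComp f (i + m) n ∘ nComp f i m := by
  induction n with
  | zero => rfl
  | succ n ih => rw [← add_assoc, nComp, ih, nComp, add_assoc, Function.comp_assoc]

theorem nComp_const (g : X → X) (i n : ℕ) : nComp (fun _ => g) i n = g^[n] := by
  induction n with
  | zero => rfl
  | succ n ih => rw [nComp, ih, Function.iterate_succ']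

theorem nComp_iterNDS (f : ℕ → X → X) (k i n : ℕ) :
    nComp (iterNDS f k) i n = nComp f (k * i) (k * n) := by
  induction n with
  | zero => rfl
  | succ n ih => rw [nComp, ih, iterNDS, mul_add_one, nComp_add, mul_add]

theorem nComp_periodic {f : ℕ → X → X} {k : ℕ} (hf : Function.Periodic f k) :
    Function.Periodic (nComp f) k := by
  intro i
  funext n
  induction n with
  | zero => rfl
  | succ n ih => rw [nComp, nComp, ih, add_right_comm, hf]

theorem iterNDS_eq_const_of_periodic {f : ℕ → X → X} {k : ℕ} (hf : Function.Periodic f k) :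
    iterNDS f k = fun _ => nComp f 0 k := by
  funext n
  rw [iterNDS, mul_comm, ← smul_eq_mul, (nComp_periodic hf).nsmul_eq]

end Composition

section Transitivity

variable {X : Type*} [TopologicalSpace X]

theorem MultiTransWrt.of_mul {f : ℕ → X → X} {p : ℕ} {a : Fin p → ℕ} {c : ℕ} (hc : 1 ≤ c)
    (h : MultiTransWrt f fun i => c * a i) : MultiTransWrt f a := by
  intro U V hU hU' hV hV'
  obtain ⟨l, hl, hit⟩ := h U V hU hU' hV hV'
  refine ⟨c * l, Nat.mul_pos hc hl, fun i => ?_⟩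
  rw [mul_left_comm, ← mul_assoc]
  exact hit i

theorem multiTransWrt_iterNDS_iff (f : ℕ → X → X) (k : ℕ) {p : ℕ} (a : Fin p → ℕ) :
    MultiTransWrt (iterNDS f k) a ↔ MultiTransWrt f fun i => k * a i := by
  simp only [MultiTransWrt, nComp_iterNDS, mul_zero, mul_assoc]

theorem stronglyMultiTransitive_iterNDS_iff (f : ℕ → X → X) {k : ℕ} (hk : 1 ≤ k) :
    StronglyMultiTransitive (iterNDS f k) ↔ StronglyMultiTransitive f := by
  simp only [StronglyMultiTransitive, multiTransWrt_iterNDS_iff]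
  constructor
  · intro h p hp a ha
    exact (h p hp a ha).of_mul hk
  · intro h p hp a ha
    exact h p hp (fun i => k * a i) fun i => Nat.mul_pos hk (ha i)

theorem stronglyMultiTransitive_const_iff (g : X → X) :
    StronglyMultiTransitive (fun _ => g) ↔ ADSStronglyMultiTransitive g := by
  simp only [StronglyMultiTransitive, MultiTransWrt, nComp_const, ADSStronglyMultiTransitive]

theorem periodic_stronglyMultiTransitive_iff_general {f : ℕ → X → X} {k : ℕ} (hk : 1 ≤ k)
    (hf : Function.Periodic f k) :
    StronglyMultiTransitive f ↔ ADSStronglyMultiTransitive (nComp f 0 k) := by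
  rw [← stronglyMultiTransitive_iterNDS_iff f hk, iterNDS_eq_const_of_periodic hf,
    stronglyMultiTransitive_const_iff]

end Transitivity

/-- a `k`-periodic NDS is strongly multi-transitive iff the autonomous
system given by `g = f_k ∘ ⋯ ∘ f_1` is strongly multi-transitive. -/
theorem periodic_stronglyMultiTransitive_iff {X : Type*} [MetricSpace X] [CompactSpace X]
    (f : ℕ → X → X) (hf : ∀ n, Continuous (f n))
    (k : ℕ) (hk : 1 ≤ k) (hper : ∀ n : ℕ, f (n + k) = f n) :
    StronglyMultiTransitive f ↔ ADSStronglyMultiTransitive (nComp f 0 k) :=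
  periodic_stronglyMultiTransitive_iff_general hk hper
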